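/- arXiv:2106.11408 — 4 statements merged into one kernel-verified Lean document; each statement's English description precedes it below -/
import Mathlib

section
/- Suppose all the stopping-point equations of the DAGP algorithm hold. That is, there exist vectors x^v, z^v, g^v, h^v ∈ ℝ^m for v = 1,…,M such that: (i) z^v = x^v − Σ_{u=1}^M w_{vu} x^u − μ(∇f_v(x^v) − g^v) for all v; (ii) x^v ∈ S_v and ⟨y − x^v, z^v − x^v⟩ ≤ 0 for all y ∈ S_v (i.e. x^v is the Euclidean projection of z^v onto S_v); (iii) ρ[∇f_v(x^v) − g^v + (1/μ)(z^v − x^v)] + α(h^v − g^v) = 0 for all v; (iv) Σ_{u=1}^M q_{vu}(h^u − g^u) = 0 for all v; and (v) Σ_{v=1}^M h^v = 0. Then there exists x* ∈ ℝ^m such that x^v = x* for every v (consensus), x* ∈ ∩_{v=1}^M S_v, the vector n^v := g^v − ∇f_v(x*) belongs to the normal cone ∂I_{S_v}(x*) for every v, and Σ_{v=1}^M (n^v + ∇f_v(x*)) = 0; in particular 0 ∈ Σ_{v=1}^M (∂I_{S_v}(x*) + ∇f_v(x*)), so x* satisfies the first-order optimality condition of the constrained problem min Σ_v f_v(x) subject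 to x ∈ ∩_v S_v. -/
/-!
Eliminating `z` between (i) and (iii) gives `α (h - g) = (ρ / μ) W x`, while (iv) and
`ker Q = ker Wᵀ` give `Wᵀ (h - g) = 0`. So, in each coordinate, `h - g` is both proportional
to a vector of `range W` and in `ker Wᵀ = (range W)ᗮ`, hence zero
(`mulVec_eq_zero_of_smul_eq`). Therefore `W x = 0`, which is consensus because
`ker W = span {1}`, and `h = g`, so `∑ g = ∑ h = 0`. Finally (i) reduces to
`z - x = μ (g - ∇f(x))`, and the projection inequality is the normal cone condition.
-/

open scoped InnerProductSpace

/-- If a nonzero multiple of `W y` is a nonzero multiple of a vector `d` in the kernel of `Wᵀ`,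
then `W y` vanishes, because that kernel is the orthogonal complement of the range of `W`. -/
lemma mulVec_eq_zero_of_smul_eq {n : Type*} [Fintype n] {W : Matrix n n ℝ} {d y : n → ℝ}
    {a b : ℝ} (ha : a ≠ 0) (hb : b ≠ 0) (hd : a • d = b • W.mulVec y)
    (hker : W.transpose.mulVec d = 0) : W.mulVec y = 0 := by
  have horth : dotProduct d (W.mulVec y) = 0 := by
    rw [Matrix.dotProduct_mulVec, ← Matrix.mulVec_transpose, hker, zero_dotProduct]
  have hdd : a * dotProduct d d = 0 := by
    rw [← smul_eq_mul, ← dotProduct_smul, hd, dotProduct_smul, horth, smul_zero]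
  have hd0 : d = 0 := dotProduct_self_eq_zero.mp ((mul_eq_zero.mp hdd).resolve_left ha)
  rw [hd0, smul_zero] at hd
  exact (smul_eq_zero.mp hd.symm).resolve_left hb

/-- Theorem 1 of the paper.
Any stopping point of the DAGP algorithm is a consensus point `x*` lying in the
intersection of the constraint sets, the vectors `n^v = g^v - ∇f_v(x*)` belong to the
normal cones `∂I_{S_v}(x*)`, and `∑_v (n^v + ∇f_v(x*)) = 0`, i.e. `x*` satisfies the
first-order optimality condition of `min ∑_v f_v` over `⋂_v S_v`. -/
theorem dagp_stopping_point_optimal (m M : ℕ)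
    (f : Fin M → EuclideanSpace ℝ (Fin m) → ℝ)
    (f' : Fin M → EuclideanSpace ℝ (Fin m) → EuclideanSpace ℝ (Fin m))
    (hdiff : ∀ v x, HasGradientAt (f v) (f' v x) x)
    (S : Fin M → Set (EuclideanSpace ℝ (Fin m)))
    (hSne : ∀ v, (S v).Nonempty) (hScl : ∀ v, IsClosed (S v))
    (hScv : ∀ v, Convex ℝ (S v))
    (W Q : Matrix (Fin M) (Fin M) ℝ)
    (hkerW : ∀ y : Fin M → ℝ, W.mulVec y = 0 ↔ ∃ c : ℝ, y = fun _ => c)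
    (hkerQ : ∀ y : Fin M → ℝ, Q.mulVec y = 0 ↔ W.transpose.mulVec y = 0)
    (μ ρ α : ℝ) (hμ : 0 < μ) (hρ : ρ ≠ 0) (hα : α ≠ 0)
    (x z g h : Fin M → EuclideanSpace ℝ (Fin m))
    -- (i) the `z`-update is stationary
    (hz : ∀ v, z v = x v - (∑ u, W v u • x u) - μ • (f' v (x v) - g v))
    -- (ii) `x^v` is the Euclidean projection of `z^v` onto `S_v`
    (hxS : ∀ v, x v ∈ S v)
    (hproj : ∀ v, ∀ y ∈ S v, ⟪y - x v, z v - x v⟫_ℝ ≤ 0)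
    -- (iii) the `g`-update is stationary
    (hg : ∀ v, ρ • (f' v (x v) - g v + μ⁻¹ • (z v - x v)) + α • (h v - g v) = 0)
    -- (iv) the `h`-update is stationary
    (hh : ∀ v, ∑ u, Q v u • (h u - g u) = 0)
    -- (v) the `h` variables sum to zero
    (hsum : ∑ v, h v = 0) :
    ∃ xstar : EuclideanSpace ℝ (Fin m),
      (∀ v, x v = xstar) ∧
      (∀ v, xstar ∈ S v) ∧
      (∀ v, ∀ y ∈ S v, ⟪g v - f' v xstar, y - xstar⟫_ℝ ≤ 0) ∧
      (∑ v, ((g v - f' v xstar) + f' v xstar) = 0) := by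
  have hμ0 : μ ≠ 0 := ne_of_gt hμ
  -- Substituting (i) into (iii): the gradient terms cancel.
  have hrel : ∀ v, α • (h v - g v) = (ρ * μ⁻¹) • ∑ u, W v u • x u := by
    intro v
    have hinner : f' v (x v) - g v + μ⁻¹ • (z v - x v) = -(μ⁻¹ • ∑ u, W v u • x u) := by
      have hzx : z v - x v = -(∑ u, W v u • x u) - μ • (f' v (x v) - g v) := by
        rw [hz v]; abel
      rw [hzx, smul_sub, inv_smul_smul₀ hμ0, smul_neg]
      abel
    have hgv := hg v
    rw [hinner, smul_neg, smul_smul] at hgv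
    exact (neg_add_eq_zero.mp hgv).symm
  have hWx : ∀ i : Fin m, W.mulVec (fun u => x u i) = 0 := by
    intro i
    refine mulVec_eq_zero_of_smul_eq (d := fun u => (h u - g u) i) hα
      (mul_ne_zero hρ (inv_ne_zero hμ0)) ?_ ?_
    · funext v
      have hvi := congrArg (fun y : EuclideanSpace ℝ (Fin m) => y i) (hrel v)
      simpa [Matrix.mulVec, dotProduct] using hvi
    · rw [← hkerQ]
      funext v
      have hvi := congrArg (fun y : EuclideanSpace ℝ (Fin m) => y i) (hh v)
      simpa [Matrix.mulVec, dotProduct] using hvi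
  have hsumW : ∀ v, ∑ u, W v u • x u = 0 := by
    intro v
    ext i
    have hvi := congrFun (hWx i) v
    simpa [Matrix.mulVec, dotProduct] using hvi
  have hhg : ∀ v, h v = g v := by
    intro v
    have hv := hrel v
    rw [hsumW v, smul_zero] at hv
    exact sub_eq_zero.mp ((smul_eq_zero.mp hv).resolve_left hα)
  -- The common value is assembled coordinate by coordinate, which also covers `M = 0`.
  choose c hc using fun i => (hkerW _).mp (hWx i)
  have hcons : ∀ v, x v = WithLp.toLp 2 c := by
    intro v
    ext i
    exact congrFun (hc i) v
  refine ⟨WithLp.toLp 2 c, hcons, fun v => hcons v ▸ hxS v, ?_, ?_⟩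
  · intro v y hy
    rw [← hcons v]
    have hzx : z v - x v = μ • (g v - f' v (x v)) := by
      rw [hz v, hsumW v, ← neg_sub (f' v (x v)) (g v), smul_neg]; abel
    have hp := hproj v y hy
    rw [hzx, real_inner_smul_right, real_inner_comm] at hp
    exact nonpos_of_mul_nonpos_right hp hμ
  · simp only [sub_add_cancel]
    simpa only [hhg] using hsum
end

section
/- Suppose there exist vectors x^v, z^v, g^v, h^v ∈ ℝ^m for v = 1,…,M and vectors d^v ∈ ℝ^m (representing ∇f_v(x^v)) such that: (i) z^v = x^v − Σ_{u=1}^M w_{vu} x^u − μ(d^v − g^v) for all v; (ii) ρ[d^v − g^v + (1/μ)(z^v − x^v)] + α(h^v − g^v) = 0 for all v; and (iii) Σ_{u=1}^M q_{vu}(h^u − g^u) = 0 for all v. If ker(Q) = ker(Wᵀ), ker(W) = span{1}, μ > 0 and ρ ≠ 0, then the matrix X whose rows are the x^v satisfies Q W X = 0 and consequently W X = 0; hence all the x^v are equal, i.e. the stopping point is a consensus point. -/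
/-!
Eliminating `Z` between (i) and (ii) gives `W X = (μ α / ρ) (H - G)`, and (iii) says
`Q (H - G) = 0`, so `Q W X = 0`. As `ker Q = ker Wᵀ`, every column `y` of `X` satisfies
`Wᵀ W y = 0`, which over `ℝ` forces `W y = 0`; since `ker W = span {1}`, each column of `X`
is constant.
-/

/-- consensus part of the proof of Theorem 1 of the paper.
At any stopping point of the DAGP dynamics, the matrix `X` whose rows are the local
variables `x^v` satisfies `Q W X = 0`, hence `W X = 0`, hence all `x^v` are equal. -/
theorem dagp_stopping_point_consensus (m M : ℕ)
    (W Q : Matrix (Fin M) (Fin M) ℝ)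
    (hkerQ : ∀ y : Fin M → ℝ, Q.mulVec y = 0 ↔ W.transpose.mulVec y = 0)
    (hkerW : ∀ y : Fin M → ℝ, W.mulVec y = 0 ↔ ∃ c : ℝ, y = fun _ => c)
    (μ ρ α : ℝ) (hμ : 0 < μ) (hρ : ρ ≠ 0)
    (x z g h d : Fin M → (Fin m → ℝ))
    -- (i) the `z`-update is stationary (`d v` plays the role of `∇f_v(x^v)`)
    (hz : ∀ v, z v = x v - (∑ u, W v u • x u) - μ • (d v - g v))
    -- (ii) the `g`-update is stationary
    (hg : ∀ v, ρ • (d v - g v + μ⁻¹ • (z v - x v)) + α • (h v - g v) = 0)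
    -- (iii) the `h`-update is stationary
    (hh : ∀ v, ∑ u, Q v u • (h u - g u) = 0) :
    Q * (W * Matrix.of x) = 0 ∧ W * Matrix.of x = 0 ∧ ∀ u v, x u = x v := by
  have hWX : W * Matrix.of x = (μ * α / ρ) • Matrix.of (h - g) := by
    ext v j
    have h1 := congrFun (hz v) j
    have h2 := congrFun (hg v) j
    simp only [Pi.sub_apply, Pi.add_apply, Pi.smul_apply, Finset.sum_apply, smul_eq_mul,
      Pi.zero_apply] at h1 h2
    simp only [Matrix.mul_apply, Matrix.of_apply, Matrix.smul_apply, Pi.sub_apply, smul_eq_mul]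
    rw [h1] at h2
    have hμ0 := hμ.ne'
    field_simp at h2 ⊢
    linarith
  have hQ : Q * Matrix.of (h - g) = 0 := by
    ext v j
    simpa [Matrix.mul_apply] using congrFun (hh v) j
  have hQWX : Q * (W * Matrix.of x) = 0 := by
    rw [hWX, Matrix.mul_smul, hQ, smul_zero]
  have hWX0 : W * Matrix.of x = 0 := by
    have hT : W.transpose * (W * Matrix.of x) = 0 := by
      ext v j
      exact congrFun ((hkerQ fun u => (W * Matrix.of x) u j).1
        (funext fun u => congrFun (congrFun hQWX u) j)) v
    rw [← Matrix.conjTranspose_eq_transpose_of_trivial, ← Matrix.mul_assoc] at hT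
    exact (Matrix.conjTranspose_mul_self_mul_eq_zero W _).1 hT
  refine ⟨hQWX, hWX0, fun u v => funext fun j => ?_⟩
  obtain ⟨c, hc⟩ := (hkerW fun u => x u j).1
    (funext fun u => congrFun (congrFun hWX0 u) j)
  exact (congrFun hc u).trans (congrFun hc v).symm
end

section
/- Fix a node v. Let f_v : ℝ^m → ℝ be convex and differentiable with L-Lipschitz gradient, let S_v ⊆ ℝ^m be a nonempty closed convex set, let x* ∈ S_v, and let n^v ∈ ∂I_{S_v}(x*). Let μ > 0, let x_n^1,…,x_n^M ∈ ℝ^m and g_n^v ∈ ℝ^m be arbitrary, set z_n^v := x_n^v − Σ_{u=1}^M w_{vu} x_n^u − μ(∇f_v(x_n^v) − g_n^v), and let x_{n+1}^v := P_{S_v}(z_n^v). Define F^v(w) := f_v(w) − f_v(x*) − ⟨∇f_v(x*), w − x*⟩ and T^v(w) := −⟨n^v, w − x*⟩. Then μ(F^v(x_{n+1}^v) + T^v(x_{n+1}^v)) − (Lμ/2)‖x_{n+1}^v − x_n^v‖² + ⟨x* − x_{n+1}^v, x_n^v − Σ_{u=1}^M w_{vu} x_n^u − x_{n+1}^v + μ(g_n^v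 − ∇f_v(x*) − n^v)⟩ ≤ 0. -/
/-!
With `a = xnext`, `s = xstar`, `y = x v`, the terms in `f' xstar` and `nv` cancel from the left-hand
side, which becomes
`μ (f a - f s - ⟪f' y, a - s⟫ - L / 2 * ‖a - y‖ ^ 2) + ⟪s - a, z - a⟫`.
The last inner product is nonpositive by the variational inequality of the projection. The bracket
is nonpositive by adding the descent inequality for the `L`-smooth `f` between `y` and `a`
(`descent_inequality`) to the first-order convexity inequality between `y` and `s`
(`gradient_inequality`).
-/

open scoped InnerProductSpace

section FirstOrder

variable {E : Type*} [NormedAddCommGroup E] [InnerProductSpace ℝ E] [CompleteSpace E]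

theorem hasDerivAt_along_line {f : E → ℝ} {f' : E → E} (hdiff : ∀ w, HasGradientAt f (f' w) w)
    (y d : E) (t : ℝ) :
    HasDerivAt (fun t : ℝ => f (y + t • d)) ⟪f' (y + t • d), d⟫_ℝ t := by
  have hline : HasDerivAt (fun t : ℝ => y + t • d) d t := by
    simpa using ((hasDerivAt_id t).smul_const d).const_add y
  have h := (hdiff (y + t • d)).hasFDerivAt.comp_hasDerivAt t hline
  rw [InnerProductSpace.toDual_apply_apply] at h
  exact h

theorem gradient_inequality {f : E → ℝ} {f' : E → E} (hconv : ConvexOn ℝ Set.univ f)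
    (hdiff : ∀ w, HasGradientAt f (f' w) w) (y s : E) :
    f y + ⟪f' y, s - y⟫_ℝ ≤ f s := by
  have hφ : ConvexOn ℝ Set.univ (fun t : ℝ => f (y + t • (s - y))) := by
    have h := hconv.comp_affineMap (AffineMap.lineMap y s : ℝ →ᵃ[ℝ] E)
    simpa [Function.comp_def, AffineMap.lineMap_apply, add_comm] using h
  have h := hφ.le_slope_of_hasDerivAt (Set.mem_univ 0) (Set.mem_univ 1) one_pos
    (hasDerivAt_along_line hdiff y (s - y) 0)
  simp [slope_def_field] at h
  linarith

/-- The quadratic upper bound for a function with `L`-Lipschitz gradient: along the segment from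
`y` to `a`, the gap between `f` and the quadratic has nonpositive derivative, by Cauchy–Schwarz. -/
theorem descent_inequality {f : E → ℝ} {f' : E → E} (hdiff : ∀ w, HasGradientAt f (f' w) w)
    {L : ℝ} (hLip : ∀ w w', ‖f' w - f' w'‖ ≤ L * ‖w - w'‖) (y a : E) :
    f a ≤ f y + ⟪f' y, a - y⟫_ℝ + L / 2 * ‖a - y‖ ^ 2 := by
  set d := a - y with hd
  have hder : ∀ t : ℝ, HasDerivAt
      (fun t : ℝ => f (y + t • d) - t * ⟪f' y, d⟫_ℝ - t ^ 2 * (L / 2 * ‖d‖ ^ 2))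
      (⟪f' (y + t • d), d⟫_ℝ - ⟪f' y, d⟫_ℝ - 2 * t * (L / 2 * ‖d‖ ^ 2)) t := by
    intro t
    have h1 := (hasDerivAt_id t).mul_const ⟪f' y, d⟫_ℝ
    have h2 := (hasDerivAt_pow 2 t).mul_const (L / 2 * ‖d‖ ^ 2)
    have h := ((hasDerivAt_along_line hdiff y d t).sub h1).sub h2
    simp only [one_mul, Nat.cast_ofNat, Nat.add_one_sub_one, pow_one] at h
    exact h
  have hanti := antitoneOn_of_deriv_nonpos (convex_Ici (0 : ℝ))
    (fun t _ => (hder t).continuousAt.continuousWithinAt)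
    (fun t _ => (hder t).differentiableAt.differentiableWithinAt) (by
      intro t ht
      rw [interior_Ici, Set.mem_Ioi] at ht
      rw [(hder t).deriv, ← inner_sub_left]
      have h1 := real_inner_le_norm (f' (y + t • d) - f' y) d
      have h2 := hLip (y + t • d) y
      rw [add_sub_cancel_left, norm_smul, Real.norm_of_nonneg ht.le] at h2
      have h3 := mul_le_mul_of_nonneg_right h2 (norm_nonneg d)
      nlinarith)
  have h := hanti (Set.mem_Ici.2 le_rfl) (Set.mem_Ici.2 zero_le_one) zero_le_one
  have hya : y + d = a := by rw [hd]; abel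
  simp [hya] at h
  linarith

end FirstOrder

/-- per-node, per-iteration inequality (7) in Appendix B of the paper.
For node `v` with convex `L`-smooth `f_v`, closed convex set `S_v ∋ x*`,
normal-cone vector `n^v ∈ ∂I_{S_v}(x*)`, `z_n^v` given by the DAGP update and
`x_{n+1}^v = P_{S_v}(z_n^v)`, one has
`μ (F^v(x_{n+1}^v) + T^v(x_{n+1}^v)) - (Lμ/2)‖x_{n+1}^v - x_n^v‖²
  + ⟪x* - x_{n+1}^v, x_n^v - ∑_u w_{vu} x_n^u - x_{n+1}^v + μ(g_n^v - ∇f_v(x*) - n^v)⟫ ≤ 0`. -/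
theorem dagp_per_node_inequality (m M : ℕ) (v : Fin M)
    (f : EuclideanSpace ℝ (Fin m) → ℝ)
    (f' : EuclideanSpace ℝ (Fin m) → EuclideanSpace ℝ (Fin m))
    (hconv : ConvexOn ℝ Set.univ f)
    (hdiff : ∀ w, HasGradientAt f (f' w) w)
    (L : ℝ) (hLip : ∀ w w', ‖f' w - f' w'‖ ≤ L * ‖w - w'‖)
    (S : Set (EuclideanSpace ℝ (Fin m)))
    (hSne : S.Nonempty) (hScl : IsClosed S) (hScv : Convex ℝ S)
    (xstar : EuclideanSpace ℝ (Fin m)) (hxstar : xstar ∈ S)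
    (nv : EuclideanSpace ℝ (Fin m))
    (hnv : ∀ y ∈ S, ⟪nv, y - xstar⟫_ℝ ≤ 0)
    (μ : ℝ) (hμ : 0 < μ)
    (W : Matrix (Fin M) (Fin M) ℝ)
    (x : Fin M → EuclideanSpace ℝ (Fin m)) (g : EuclideanSpace ℝ (Fin m))
    (z : EuclideanSpace ℝ (Fin m))
    (hz : z = x v - (∑ u, W v u • x u) - μ • (f' (x v) - g))
    (xnext : EuclideanSpace ℝ (Fin m))
    -- `xnext = P_S(z)`, via the projection variational characterization
    (hxnextS : xnext ∈ S)
    (hproj : ∀ y ∈ S, ⟪y - xnext, z - xnext⟫_ℝ ≤ 0) :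
    μ * ((f xnext - f xstar - ⟪f' xstar, xnext - xstar⟫_ℝ) + (-⟪nv, xnext - xstar⟫_ℝ))
      - L * μ / 2 * ‖xnext - x v‖ ^ 2
      + ⟪xstar - xnext, x v - (∑ u, W v u • x u) - xnext + μ • (g - f' xstar - nv)⟫_ℝ
      ≤ 0 := by
  have h1 := descent_inequality hdiff hLip (x v) xnext
  have h2 := gradient_inequality hconv hdiff (x v) xstar
  have h3 := hproj xstar hxstar
  have h4 := mul_le_mul_of_nonneg_left (add_le_add h1 h2) hμ.le
  subst hz
  generalize (∑ u, W v u • x u) = σ at *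
  simp only [inner_sub_left, inner_sub_right, inner_add_right, inner_smul_right] at h3 h4 ⊢
  rw [real_inner_comm xnext (f' (x v)), real_inner_comm xstar (f' (x v))] at h4
  rw [real_inner_comm xnext (f' xstar), real_inner_comm xstar (f' xstar),
    real_inner_comm xnext nv, real_inner_comm xstar nv]
  nlinarith
end

section
/- Let f_v : ℝ^m → ℝ be convex and differentiable for v = 1,…,M, let S_v ⊆ ℝ^m be nonempty closed convex sets, let x* ∈ ∩_v S_v, and let n^v ∈ ∂I_{S_v}(x*) for each v with Σ_{v=1}^M (n^v + ∇f_v(x*)) = 0. Define F^v(w) := f_v(w) − f_v(x*) − ⟨∇f_v(x*), w − x*⟩ and T^v(w) := −⟨n^v, w − x*⟩. Let x̄^v ∈ S_v for each v, set x̄ := (1/M) Σ_v x̄^v, and suppose Σ_{v=1}^M (F^v(x̄^v) + T^v(x̄^v)) ≤ ε for some ε ≥ 0. Then | Σ_{v=1}^M f_v(x̄^v) − Σ_{v=1}^M f_v(x*) | ≤ ε + sqrt( Σ_v ‖n^v + ∇f_v(x*)‖² ) · sqrt( Σ_v ‖x̄^v − x̄‖² ). -/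
open scoped InnerProductSpace

/-! The gap `∑ (f_v(x̄^v) - f_v(x*))` equals the sum of `F^v + T^v`, which lies in `[0, ε]`, plus
`∑ ⟪n^v + ∇f_v(x*), x̄^v - x̄⟫`. The average `x̄` may replace `x*` in the latter because the vectors
`n^v + ∇f_v(x*)` sum to zero. Nonnegativity of `F^v` is the first-order characterization of
convexity, that of `T^v` is the normal cone condition, and the remaining inner-product sum is
bounded by Cauchy–Schwarz. -/

/-- A convex function lies above its tangent plane, by the one-variable slope inequality along the
line from `x` to `w`. -/
lemma inner_gradient_le_sub {E : Type*} [NormedAddCommGroup E] [InnerProductSpace ℝ E]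
    [CompleteSpace E] {f : E → ℝ} {g x : E} (hf : ConvexOn ℝ Set.univ f)
    (hg : HasGradientAt f g x) (w : E) : ⟪g, w - x⟫_ℝ ≤ f w - f x := by
  have hc : ConvexOn ℝ Set.univ (f ∘ AffineMap.lineMap (k := ℝ) x w) := by
    simpa using hf.comp_affineMap (AffineMap.lineMap (k := ℝ) x w)
  have hd : HasDerivAt (f ∘ AffineMap.lineMap (k := ℝ) x w) ⟪g, w - x⟫_ℝ 0 := by
    have h : HasFDerivAt f (InnerProductSpace.toDual ℝ E g)
        (AffineMap.lineMap (k := ℝ) x w 0) := by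
      simpa using hg.hasFDerivAt
    simpa using h.comp_hasDerivAt (0 : ℝ) AffineMap.hasDerivAt_lineMap
  have := hc.le_slope_of_hasDerivAt (Set.mem_univ 0) (Set.mem_univ 1) zero_lt_one hd
  simpa [slope_def_field] using this

/-- Cauchy–Schwarz for finite families of vectors. -/
lemma abs_sum_inner_le_sqrt_mul_sqrt {ι E : Type*} [Fintype ι] [NormedAddCommGroup E]
    [InnerProductSpace ℝ E] (a b : ι → E) :
    |∑ i, ⟪a i, b i⟫_ℝ| ≤ √(∑ i, ‖a i‖ ^ 2) * √(∑ i, ‖b i‖ ^ 2) :=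
  calc |∑ i, ⟪a i, b i⟫_ℝ| ≤ ∑ i, |⟪a i, b i⟫_ℝ| := Finset.abs_sum_le_sum_abs _ _
    _ ≤ ∑ i, ‖a i‖ * ‖b i‖ := Finset.sum_le_sum fun i _ => abs_real_inner_le_norm _ _
    _ ≤ _ := Real.sum_mul_le_sqrt_mul_sqrt _ _ _

/-- final Cauchy–Schwarz step in the proof of Theorem 2 of the paper.
If `∑_v (F^v(x̄^v) + T^v(x̄^v)) ≤ ε` with `x̄^v ∈ S_v` and `∑_v (n^v + ∇f_v(x*)) = 0`, then
`|∑_v f_v(x̄^v) - ∑_v f_v(x*)| ≤ ε + √(∑_v ‖n^v + ∇f_v(x*)‖²) · √(∑_v ‖x̄^v - x̄‖²)`. -/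
theorem dagp_cauchy_schwarz_step (m M : ℕ)
    (f : Fin M → EuclideanSpace ℝ (Fin m) → ℝ)
    (f' : Fin M → EuclideanSpace ℝ (Fin m) → EuclideanSpace ℝ (Fin m))
    (hconv : ∀ v, ConvexOn ℝ Set.univ (f v))
    (hdiff : ∀ v w, HasGradientAt (f v) (f' v w) w)
    (S : Fin M → Set (EuclideanSpace ℝ (Fin m)))
    (hSne : ∀ v, (S v).Nonempty) (hScl : ∀ v, IsClosed (S v))
    (hScv : ∀ v, Convex ℝ (S v))
    (xstar : EuclideanSpace ℝ (Fin m)) (hxstar : ∀ v, xstar ∈ S v)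
    (nv : Fin M → EuclideanSpace ℝ (Fin m))
    (hnv : ∀ v, ∀ y ∈ S v, ⟪nv v, y - xstar⟫_ℝ ≤ 0)
    (hopt : ∑ v, (nv v + f' v xstar) = 0)
    (xbar : Fin M → EuclideanSpace ℝ (Fin m)) (hxbarS : ∀ v, xbar v ∈ S v)
    (ε : ℝ) (hε : 0 ≤ ε)
    (hgap : ∑ v, ((f v (xbar v) - f v xstar - ⟪f' v xstar, xbar v - xstar⟫_ℝ)
        + (-⟪nv v, xbar v - xstar⟫_ℝ)) ≤ ε) :
    |∑ v, f v (xbar v) - ∑ v, f v xstar| ≤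
      ε + Real.sqrt (∑ v, ‖nv v + f' v xstar‖ ^ 2) *
        Real.sqrt (∑ v, ‖xbar v - (M : ℝ)⁻¹ • ∑ u, xbar u‖ ^ 2) := by
  set c := (M : ℝ)⁻¹ • ∑ u, xbar u
  have hpos : 0 ≤ ∑ v, ((f v (xbar v) - f v xstar - ⟪f' v xstar, xbar v - xstar⟫_ℝ)
      + (-⟪nv v, xbar v - xstar⟫_ℝ)) := by
    refine Finset.sum_nonneg fun v _ => ?_
    have h1 := inner_gradient_le_sub (hconv v) (hdiff v xstar) (xbar v)
    have h2 := hnv v (xbar v) (hxbarS v)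
    linarith
  have hshift : ∑ v, ⟪nv v + f' v xstar, c - xstar⟫_ℝ = 0 := by
    rw [← sum_inner, hopt, inner_zero_left]
  have hid : ∑ v, f v (xbar v) - ∑ v, f v xstar =
      ∑ v, ((f v (xbar v) - f v xstar - ⟪f' v xstar, xbar v - xstar⟫_ℝ)
        + (-⟪nv v, xbar v - xstar⟫_ℝ)) + ∑ v, ⟪nv v + f' v xstar, xbar v - c⟫_ℝ := by
    rw [← add_zero (_ + _), ← hshift, ← Finset.sum_sub_distrib, ← Finset.sum_add_distrib,
      ← Finset.sum_add_distrib]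
    refine Finset.sum_congr rfl fun v _ => ?_
    simp only [inner_add_left, inner_sub_right]
    ring
  rw [hid]
  refine (abs_add_le _ _).trans (add_le_add ?_ (abs_sum_inner_le_sqrt_mul_sqrt _ _))
  rwa [abs_of_nonneg hpos]
end
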